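/- (Prior correlation of observations under the change point PPM) Fix n ≥ 2, μ_0 ∈ ℝ, κ_0 > 0, α_0 > 1, β_0 > 0, and let w be a probability mass function on the set C_n of contiguous partitions of {1,…,n}. For a contiguous partition ρ with blocks S_1,…,S_k define the density on ℝ^n f_ρ(y) = ∏_{j=1}^k t_{|S_j|}(y_{S_j} | 2α_0, μ_0 𝟏_{|S_j|}, (β_0/α_0)(I_{|S_j|} + κ_0^{-1} J_{|S_j|})), where y_{S_j} denotes the subvector of y indexed by S_j, and let f(y) = Σ_{ρ ∈ C_n} w(ρ) f_ρ(y) be the mixture density. Then for all r ≠ s in {1,…,n}, the correlation of the coordinates y_r and y_s under f equals P_w(r and s lie in the same block)/(1 + κ_0); in particular 0 ≤ Corr(y_r, y_s) ≤ 1/(1 + κ_0). -/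

import Mathlib

open MeasureTheory Matrix

/-- The multivariate Student-t density on `ℝ^m` with degrees of freedom `ν`,
location `μ` and positive definite scale matrix `S` (with `|·|` as in the
context). -/
noncomputable def multivariateTDensity (m : ℕ) (ν : ℝ) (μ : Fin m → ℝ)
    (S : Matrix (Fin m) (Fin m) ℝ) (y : Fin m → ℝ) : ℝ :=
  Real.Gamma ((ν + m) / 2) /
      (Real.Gamma (ν / 2) * ν ^ ((m : ℝ) / 2) * Real.pi ^ ((m : ℝ) / 2) *
        Real.sqrt S.det) *
    |1 + (y - μ) ⬝ᵥ (S⁻¹ *ᵥ (y - μ)) / ν| ^ (-(ν + m) / 2)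

/-- A contiguous partition of `{1,…,n}` (represented by `Fin n`, where `i : Fin n`
stands for the point `i+1`): the blocks are the nonempty intervals determined by
boundaries `0 = τ 0 < τ 1 < ⋯ < τ k = n`, block `j` being
`{i : Fin n ∣ τ (j-1) ≤ i < τ j}` (i.e. `{τ_{j-1}+1, …, τ_j}`). -/
def IsContigPartition (n : ℕ) (ρ : Finset (Finset (Fin n))) : Prop :=
  ∃ (k : ℕ) (τ : ℕ → ℕ), 1 ≤ k ∧ τ 0 = 0 ∧ τ k = n ∧ (∀ j < k, τ j < τ (j + 1)) ∧
    ρ = Finset.image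
      (fun j => Finset.univ.filter fun i : Fin n => τ (j - 1) ≤ (i : ℕ) ∧ (i : ℕ) < τ j)
      (Finset.Icc 1 k)

/-!
A Student-t density with `ν` degrees of freedom is the affine image, under a square root of `ν • S`,
of a density proportional to `(1 + ‖z‖²) ^ (-(ν + m) / 2)`. The latter is normalized by writing the
power as a Gamma-weighted mixture of Gaussians; its first and mixed second moments vanish by
reflecting a coordinate, its second moments agree by permuting coordinates, and their sum
`∫ ‖z‖² (1 + ‖z‖²) ^ (-a)` reduces to normalizing constants through `‖z‖² = (1 + ‖z‖²) - 1` and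
`Γ(x + 1) = x Γ(x)`. Hence the t-density has mean `μ` and covariance `ν / (ν - 2) • S`.

Independent blocks give a block diagonal covariance, so under `f_ρ` every coordinate has mean `μ₀`
and variance `β₀ / (α₀ - 1) * (1 + κ₀⁻¹)`, while two distinct coordinates have covariance
`β₀ / (α₀ - 1) * κ₀⁻¹` when they share a block and `0` otherwise. Since the mean does not depend on
`ρ`, mixing over `ρ` averages the covariance matrices, and the correlation is
`P * κ₀⁻¹ / (1 + κ₀⁻¹) = P / (1 + κ₀)`.
-/

section BetaTypeIntegral

variable {V : Type*} [NormedAddCommGroup V]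

/-- The integrand `l ^ (a - 1) * exp (-(1 + ‖v‖²) l)` presenting `Γ(a) (1 + ‖v‖²) ^ (-a)` as a
Gamma-weighted mixture over `l > 0` of Gaussian functions of `v`. -/
noncomputable def gammaGaussianKernel (a : ℝ) (v : V) (l : ℝ) : ℝ :=
  l ^ (a - 1) * Real.exp (-((1 + ‖v‖ ^ 2) * l))

lemma setIntegral_gammaGaussianKernel {a : ℝ} (ha : 0 < a) (v : V) :
    ∫ l in Set.Ioi 0, gammaGaussianKernel a v l = Real.Gamma a * (1 + ‖v‖ ^ 2) ^ (-a) := by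
  have hv : 0 < 1 + ‖v‖ ^ 2 := by positivity
  simp only [gammaGaussianKernel]
  rw [Real.integral_rpow_mul_exp_neg_mul_Ioi ha hv, one_div, Real.inv_rpow hv.le,
    Real.rpow_neg hv.le, mul_comm]

lemma integrableOn_gammaGaussianKernel {a : ℝ} (ha : 0 < a) (v : V) :
    IntegrableOn (gammaGaussianKernel a v) (Set.Ioi 0) := by
  have : 0 < Real.Gamma a := Real.Gamma_pos_of_pos ha
  refine Integrable.of_integral_ne_zero ?_
  rw [setIntegral_gammaGaussianKernel ha v]
  positivity

variable [InnerProductSpace ℝ V] [FiniteDimensional ℝ V] [MeasurableSpace V] [BorelSpace V]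

open Module (finrank)

lemma integral_gammaGaussianKernel (a : ℝ) {l : ℝ} (hl : 0 < l) :
    ∫ v : V, gammaGaussianKernel a v l =
      Real.pi ^ (finrank ℝ V / 2 : ℝ) * (Real.exp (-l) * l ^ (a - finrank ℝ V / 2 - 1)) := by
  have factor (v : V) : gammaGaussianKernel a v l =
      l ^ (a - 1) * Real.exp (-l) * Real.exp (-l * ‖v‖ ^ 2) := by
    rw [gammaGaussianKernel, mul_assoc, ← Real.exp_add]
    ring_nf
  have split_power : l ^ (a - finrank ℝ V / 2 - 1) = l ^ (a - 1) / l ^ (finrank ℝ V / 2 : ℝ) := by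
    rw [← Real.rpow_sub hl]
    ring_nf
  simp only [factor]
  rw [integral_const_mul, GaussianFourier.integral_rexp_neg_mul_sq_norm hl,
    Real.div_rpow Real.pi_pos.le hl.le, split_power]
  ring

lemma integrable_one_add_norm_sq_rpow_neg {a : ℝ} (ha : finrank ℝ V / 2 < a) :
    Integrable fun v : V => (1 + ‖v‖ ^ 2) ^ (-a) := by
  have h := integrable_rpow_neg_one_add_norm_sq (E := V) (μ := volume) (r := 2 * a) (by linarith)
  simpa only [neg_div, mul_div_cancel_left₀ a two_ne_zero] using h

lemma integrable_uncurry_gammaGaussianKernel {a : ℝ} (ha : finrank ℝ V / 2 < a) :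
    Integrable (Function.uncurry (gammaGaussianKernel (V := V) a))
      (volume.prod (volume.restrict (Set.Ioi 0))) := by
  have ha0 : 0 < a := lt_of_le_of_lt (by positivity) ha
  have hmeas : Measurable (Function.uncurry (gammaGaussianKernel (V := V) a)) := by
    unfold gammaGaussianKernel Function.uncurry
    fun_prop
  have integral_norm (v : V) : ∫ l in Set.Ioi 0, ‖gammaGaussianKernel a v l‖ =
      Real.Gamma a * (1 + ‖v‖ ^ 2) ^ (-a) := by
    rw [← setIntegral_gammaGaussianKernel ha0 v]
    refine setIntegral_congr_fun measurableSet_Ioi fun l (hl : 0 < l) => ?_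
    exact Real.norm_of_nonneg (by unfold gammaGaussianKernel; positivity)
  rw [integrable_prod_iff hmeas.aestronglyMeasurable]
  refine ⟨.of_forall fun v => integrableOn_gammaGaussianKernel ha0 v, ?_⟩
  simp only [Function.uncurry_apply_pair, integral_norm]
  exact (integrable_one_add_norm_sq_rpow_neg ha).const_mul _

lemma integral_one_add_norm_sq_rpow_neg {a : ℝ} (ha : finrank ℝ V / 2 < a) :
    ∫ v : V, (1 + ‖v‖ ^ 2) ^ (-a) =
      Real.pi ^ (finrank ℝ V / 2 : ℝ) * Real.Gamma (a - finrank ℝ V / 2) / Real.Gamma a := by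
  have ha0 : 0 < a := lt_of_le_of_lt (by positivity) ha
  have hΓ : Real.Gamma a ≠ 0 := (Real.Gamma_pos_of_pos ha0).ne'
  rw [eq_div_iff hΓ, mul_comm]
  calc Real.Gamma a * ∫ v : V, (1 + ‖v‖ ^ 2) ^ (-a)
      = ∫ v : V, ∫ l in Set.Ioi 0, gammaGaussianKernel a v l := by
        simp only [setIntegral_gammaGaussianKernel ha0, integral_const_mul]
    _ = ∫ l in Set.Ioi 0, ∫ v : V, gammaGaussianKernel a v l :=
        integral_integral_swap (integrable_uncurry_gammaGaussianKernel ha)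
    _ = ∫ l in Set.Ioi 0, Real.pi ^ (finrank ℝ V / 2 : ℝ) *
          (Real.exp (-l) * l ^ (a - finrank ℝ V / 2 - 1)) :=
        setIntegral_congr_fun measurableSet_Ioi fun _ hl => integral_gammaGaussianKernel a hl
    _ = Real.pi ^ (finrank ℝ V / 2 : ℝ) * Real.Gamma (a - finrank ℝ V / 2) := by
        rw [integral_const_mul, Real.Gamma_eq_integral (by linarith)]

end BetaTypeIntegral

section RadialMoments

variable {ι : Type*} [Fintype ι]

lemma norm_toLp_two_sq (z : ι → ℝ) : ‖WithLp.toLp 2 z‖ ^ 2 = z ⬝ᵥ z := by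
  simp only [EuclideanSpace.real_norm_sq_eq, dotProduct, ← sq]

lemma dotProduct_self_nonneg (z : ι → ℝ) : 0 ≤ z ⬝ᵥ z :=
  norm_toLp_two_sq z ▸ sq_nonneg _

lemma integrable_one_add_dotProduct_rpow_neg {a : ℝ} (ha : (Fintype.card ι : ℝ) / 2 < a) :
    Integrable fun z : ι → ℝ => (1 + z ⬝ᵥ z) ^ (-a) := by
  have h := integrable_one_add_norm_sq_rpow_neg (V := EuclideanSpace ℝ ι) (a := a)
    (by rwa [finrank_euclideanSpace])
  rw [← (PiLp.volume_preserving_toLp ι).integrable_comp_emb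
    (MeasurableEquiv.toLp 2 (ι → ℝ)).measurableEmbedding] at h
  simpa only [Function.comp_def, norm_toLp_two_sq] using h

lemma integral_one_add_dotProduct_rpow_neg {a : ℝ} (ha : (Fintype.card ι : ℝ) / 2 < a) :
    ∫ z : ι → ℝ, (1 + z ⬝ᵥ z) ^ (-a) =
      Real.pi ^ (Fintype.card ι / 2 : ℝ) * Real.Gamma (a - Fintype.card ι / 2) / Real.Gamma a := by
  have h := integral_one_add_norm_sq_rpow_neg (V := EuclideanSpace ℝ ι) (a := a)
    (by rwa [finrank_euclideanSpace])
  rw [← (PiLp.volume_preserving_toLp ι).integral_comp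
    (MeasurableEquiv.toLp 2 (ι → ℝ)).measurableEmbedding] at h
  simpa only [norm_toLp_two_sq, finrank_euclideanSpace] using h

lemma integrable_mul_one_add_dotProduct_rpow_neg {a : ℝ}
    (ha : (Fintype.card ι : ℝ) / 2 + 1 < a) {u : (ι → ℝ) → ℝ} (hu : Measurable u)
    (hbound : ∀ z, |u z| ≤ 1 + z ⬝ᵥ z) :
    Integrable fun z : ι → ℝ => u z * (1 + z ⬝ᵥ z) ^ (-a) := by
  have hmeas : Measurable fun z : ι → ℝ => u z * (1 + z ⬝ᵥ z) ^ (-a) := by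
    unfold dotProduct
    fun_prop
  refine (integrable_one_add_dotProduct_rpow_neg (a := a - 1) (by linarith)).mono'
    hmeas.aestronglyMeasurable (.of_forall fun z => ?_)
  have hz : 0 < 1 + z ⬝ᵥ z := by linarith [dotProduct_self_nonneg z]
  calc ‖u z * (1 + z ⬝ᵥ z) ^ (-a)‖
      = |u z| * (1 + z ⬝ᵥ z) ^ (-a) := by
        rw [norm_mul, Real.norm_eq_abs, Real.norm_of_nonneg (by positivity)]
    _ ≤ (1 + z ⬝ᵥ z) * (1 + z ⬝ᵥ z) ^ (-a) := by gcongr; exact hbound z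
    _ = (1 + z ⬝ᵥ z) ^ (-(a - 1)) := by
        rw [← Real.rpow_one_add' hz.le (by linarith [show (0 : ℝ) ≤ Fintype.card ι by positivity])]
        ring_nf

lemma mul_self_apply_le_dotProduct_self (z : ι → ℝ) (i : ι) : z i * z i ≤ z ⬝ᵥ z :=
  Finset.single_le_sum (f := fun k => z k * z k) (fun k _ => mul_self_nonneg (z k))
    (Finset.mem_univ i)

lemma abs_apply_le_one_add_dotProduct_self (z : ι → ℝ) (i : ι) : |z i| ≤ 1 + z ⬝ᵥ z := by
  have := mul_self_apply_le_dotProduct_self z i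
  nlinarith [sq_nonneg (|z i| - 1), abs_mul_abs_self (z i)]

lemma abs_apply_mul_apply_le_one_add_dotProduct_self (z : ι → ℝ) (i j : ι) :
    |z i * z j| ≤ 1 + z ⬝ᵥ z := by
  have := mul_self_apply_le_dotProduct_self z i
  have := mul_self_apply_le_dotProduct_self z j
  rw [abs_mul]
  nlinarith [sq_nonneg (|z i| - |z j|), abs_mul_abs_self (z i), abs_mul_abs_self (z j)]

lemma integral_eq_zero_of_update_neg [DecidableEq ι] (i : ι) {G : (ι → ℝ) → ℝ}
    (hG : ∀ z, G (Function.update z i (-z i)) = -G z) : ∫ z, G z = 0 := by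
  let reflect (j : ι) : ℝ ≃ᵐ ℝ := if j = i then MeasurableEquiv.neg ℝ else MeasurableEquiv.refl ℝ
  have hreflect (z : ι → ℝ) :
      MeasurableEquiv.piCongrRight reflect z = Function.update z i (-z i) := by
    ext j
    by_cases h : j = i
    · subst h
      simp [reflect, MeasurableEquiv.piCongrRight]
    · simp [reflect, MeasurableEquiv.piCongrRight, h]
  have hpreserve : MeasurePreserving (MeasurableEquiv.piCongrRight reflect) := by
    refine volume_preserving_pi (f := fun j => reflect j) fun j => ?_
    by_cases h : j = i
    · simp only [reflect, if_pos h]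
      exact Measure.measurePreserving_neg volume
    · simp only [reflect, if_neg h]
      exact MeasurePreserving.id volume
  have := hpreserve.integral_comp' G
  simp only [hreflect, hG, integral_neg] at this
  linarith

lemma dotProduct_self_update_neg [DecidableEq ι] (z : ι → ℝ) (i : ι) :
    Function.update z i (-z i) ⬝ᵥ Function.update z i (-z i) = z ⬝ᵥ z := by
  refine Finset.sum_congr rfl fun k _ => ?_
  by_cases h : k = i
  · subst h
    simp
  · simp [h]

lemma integral_apply_mul_radial (φ : ℝ → ℝ) (i : ι) : ∫ z : ι → ℝ, z i * φ (z ⬝ᵥ z) = 0 := by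
  classical
  refine integral_eq_zero_of_update_neg i fun z => ?_
  rw [dotProduct_self_update_neg, Function.update_self, neg_mul]

lemma integral_apply_mul_apply_mul_radial_of_ne (φ : ℝ → ℝ) {i j : ι} (hij : i ≠ j) :
    ∫ z : ι → ℝ, z i * z j * φ (z ⬝ᵥ z) = 0 := by
  classical
  refine integral_eq_zero_of_update_neg i fun z => ?_
  rw [dotProduct_self_update_neg, Function.update_self, Function.update_of_ne hij.symm]
  ring

lemma measurePreserving_comp_equiv {ι' : Type*} [Fintype ι'] (e : ι ≃ ι') :
    MeasurePreserving fun (z : ι' → ℝ) => z ∘ e :=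
  (volume_measurePreserving_piCongrLeft (fun _ : ι' => ℝ) e).symm _

lemma measurableEmbedding_comp_equiv {ι ι' : Type*} (e : ι ≃ ι') :
    MeasurableEmbedding fun (z : ι' → ℝ) => z ∘ e :=
  (MeasurableEquiv.piCongrLeft (fun _ : ι' => ℝ) e).symm.measurableEmbedding

lemma integral_mul_self_mul_radial_congr (φ : ℝ → ℝ) (i j : ι) :
    ∫ z : ι → ℝ, z i * z i * φ (z ⬝ᵥ z) = ∫ z : ι → ℝ, z j * z j * φ (z ⬝ᵥ z) := by
  classical
  rw [← (measurePreserving_comp_equiv (Equiv.swap i j)).integral_comp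
    (measurableEmbedding_comp_equiv _)]
  refine integral_congr_ae (.of_forall fun z => ?_)
  have hnorm : (z ∘ Equiv.swap i j) ⬝ᵥ (z ∘ Equiv.swap i j) = z ⬝ᵥ z :=
    Equiv.sum_comp (Equiv.swap i j) fun k => z k * z k
  simp only [hnorm, Function.comp_apply, Equiv.swap_apply_left]

lemma card_mul_integral_mul_self_mul_radial {φ : ℝ → ℝ}
    (hφ : ∀ k : ι, Integrable fun z : ι → ℝ => z k * z k * φ (z ⬝ᵥ z)) (i : ι) :
    Fintype.card ι * ∫ z : ι → ℝ, z i * z i * φ (z ⬝ᵥ z) =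
      ∫ z : ι → ℝ, z ⬝ᵥ z * φ (z ⬝ᵥ z) := by
  calc Fintype.card ι * ∫ z : ι → ℝ, z i * z i * φ (z ⬝ᵥ z)
      = ∑ k, ∫ z : ι → ℝ, z k * z k * φ (z ⬝ᵥ z) := by
        rw [Finset.sum_congr rfl fun k _ => integral_mul_self_mul_radial_congr φ k i,
          Finset.sum_const, Finset.card_univ, nsmul_eq_mul]
    _ = ∫ z : ι → ℝ, z ⬝ᵥ z * φ (z ⬝ᵥ z) := by
        rw [← integral_finsetSum _ fun k _ => hφ k]
        simp only [dotProduct, Finset.sum_mul]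

lemma integral_one_add_dotProduct_rpow_neg_sub_one {a : ℝ}
    (ha : (Fintype.card ι : ℝ) / 2 + 1 < a) :
    (a - 1 - Fintype.card ι / 2) * ∫ z : ι → ℝ, (1 + z ⬝ᵥ z) ^ (-(a - 1)) =
      (a - 1) * ∫ z : ι → ℝ, (1 + z ⬝ᵥ z) ^ (-a) := by
  have : (0 : ℝ) ≤ Fintype.card ι := by positivity
  have hΓ : 0 < Real.Gamma (a - 1) := Real.Gamma_pos_of_pos (by linarith)
  have ha1 : a - 1 ≠ 0 := by linarith
  have Γ_rec : Real.Gamma a = (a - 1) * Real.Gamma (a - 1) := by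
    rw [← Real.Gamma_add_one ha1, sub_add_cancel]
  have Γ_rec' : Real.Gamma (a - Fintype.card ι / 2) =
      (a - 1 - Fintype.card ι / 2) * Real.Gamma (a - 1 - Fintype.card ι / 2) := by
    rw [← Real.Gamma_add_one (by linarith)]
    ring_nf
  rw [integral_one_add_dotProduct_rpow_neg (by linarith),
    integral_one_add_dotProduct_rpow_neg (by linarith), Γ_rec, Γ_rec']
  field_simp

lemma integral_dotProduct_self_mul_one_add_rpow_neg {a : ℝ}
    (ha : (Fintype.card ι : ℝ) / 2 + 1 < a) :
    ∫ z : ι → ℝ, z ⬝ᵥ z * (1 + z ⬝ᵥ z) ^ (-a) =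
      Fintype.card ι / (2 * a - Fintype.card ι - 2) * ∫ z : ι → ℝ, (1 + z ⬝ᵥ z) ^ (-a) := by
  have : (0 : ℝ) ≤ Fintype.card ι := by positivity
  have split (z : ι → ℝ) : z ⬝ᵥ z * (1 + z ⬝ᵥ z) ^ (-a) =
      (1 + z ⬝ᵥ z) ^ (-(a - 1)) - (1 + z ⬝ᵥ z) ^ (-a) := by
    have hz : 0 ≤ 1 + z ⬝ᵥ z := by linarith [dotProduct_self_nonneg z]
    rw [show -(a - 1) = 1 + -a by ring, Real.rpow_one_add' hz (by linarith)]
    ring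
  have shift := integral_one_add_dotProduct_rpow_neg_sub_one ha
  have hden : 2 * a - Fintype.card ι - 2 ≠ 0 := by linarith
  simp only [split]
  rw [integral_sub (integrable_one_add_dotProduct_rpow_neg (by linarith))
    (integrable_one_add_dotProduct_rpow_neg (by linarith))]
  rw [div_mul_eq_mul_div, eq_div_iff hden]
  linear_combination 2 * shift

lemma integral_mul_self_mul_one_add_dotProduct_rpow_neg {a : ℝ}
    (ha : (Fintype.card ι : ℝ) / 2 + 1 < a) (i : ι) :
    ∫ z : ι → ℝ, z i * z i * (1 + z ⬝ᵥ z) ^ (-a) =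
      (2 * a - Fintype.card ι - 2)⁻¹ * ∫ z : ι → ℝ, (1 + z ⬝ᵥ z) ^ (-a) := by
  have hcard : (Fintype.card ι : ℝ) ≠ 0 := by
    have : Nonempty ι := ⟨i⟩
    exact_mod_cast Fintype.card_ne_zero
  have hsum := card_mul_integral_mul_self_mul_radial (φ := fun q => (1 + q) ^ (-a))
    (fun k => integrable_mul_one_add_dotProduct_rpow_neg ha (by fun_prop)
      fun z => abs_apply_mul_apply_le_one_add_dotProduct_self z k k) i
  rw [integral_dotProduct_self_mul_one_add_rpow_neg ha] at hsum
  refine mul_left_cancel₀ hcard (hsum.trans ?_)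
  ring

end RadialMoments

section MeanCov

variable {ι : Type*} [Fintype ι]

/-- The function `f` has total mass one, mean vector `μ` and covariance matrix `C` as a density
on `ι → ℝ`. The integrability fields guard against the junk value `0` of a divergent integral. -/
structure HasMeanCov (f : (ι → ℝ) → ℝ) (μ : ι → ℝ) (C : Matrix ι ι ℝ) : Prop where
  integrable : Integrable f
  integral_eq_one : ∫ y, f y = 1
  integrable_sub_mul (i : ι) : Integrable fun y => (y i - μ i) * f y
  integral_sub_mul (i : ι) : ∫ y, (y i - μ i) * f y = 0
  integrable_sub_mul_sub_mul (i j : ι) : Integrable fun y => (y i - μ i) * (y j - μ j) * f y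
  integral_sub_mul_sub_mul (i j : ι) : ∫ y, (y i - μ i) * (y j - μ j) * f y = C i j

namespace HasMeanCov

variable {f : (ι → ℝ) → ℝ} {μ : ι → ℝ} {C : Matrix ι ι ℝ}

lemma integral_apply_mul (h : HasMeanCov f μ C) (i : ι) : ∫ y, y i * f y = μ i := by
  calc ∫ y, y i * f y = ∫ y, ((y i - μ i) * f y + μ i * f y) := by
        congr with y
        ring
    _ = μ i := by
        rw [integral_add (h.integrable_sub_mul i) (h.integrable.const_mul _),
          h.integral_sub_mul, integral_const_mul, h.integral_eq_one]
        ring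

lemma reindex {ι' : Type*} [Fintype ι'] (h : HasMeanCov f μ C) (e : ι ≃ ι') :
    HasMeanCov (fun y : ι' → ℝ => f (y ∘ e)) (μ ∘ e.symm) (C.reindex e e) := by
  have integrable_comp (G : (ι → ℝ) → ℝ) :
      Integrable (fun y : ι' → ℝ => G (y ∘ e)) ↔ Integrable G :=
    (measurePreserving_comp_equiv e).integrable_comp_emb (measurableEmbedding_comp_equiv e)
  have integral_comp (G : (ι → ℝ) → ℝ) : ∫ y : ι' → ℝ, G (y ∘ e) = ∫ z, G z :=
    (measurePreserving_comp_equiv e).integral_comp (measurableEmbedding_comp_equiv e) G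
  constructor
  · exact (integrable_comp f).2 h.integrable
  · exact (integral_comp f).trans h.integral_eq_one
  · intro i
    simpa using (integrable_comp _).2 (h.integrable_sub_mul (e.symm i))
  · intro i
    simpa using (integral_comp _).trans (h.integral_sub_mul (e.symm i))
  · intro i j
    simpa using (integrable_comp _).2 (h.integrable_sub_mul_sub_mul (e.symm i) (e.symm j))
  · intro i j
    simpa using (integral_comp _).trans (h.integral_sub_mul_sub_mul (e.symm i) (e.symm j))

end HasMeanCov

section Mixture

variable {κ : Type*} {A : Finset κ}

section WeightedSum

variable {Ω : Type*} [MeasurableSpace Ω] {P : Measure Ω} {F : κ → Ω → ℝ} {u : Ω → ℝ}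

lemma integrable_mul_sum_const_mul (w : κ → ℝ)
    (hF : ∀ k ∈ A, Integrable (fun y => u y * F k y) P) :
    Integrable (fun y => u y * ∑ k ∈ A, w k * F k y) P := by
  simp only [Finset.mul_sum, mul_left_comm (u _)]
  exact integrable_finsetSum _ fun k hk => (hF k hk).const_mul _

lemma integral_mul_sum_const_mul (w : κ → ℝ)
    (hF : ∀ k ∈ A, Integrable (fun y => u y * F k y) P) :
    ∫ y, u y * ∑ k ∈ A, w k * F k y ∂P = ∑ k ∈ A, w k * ∫ y, u y * F k y ∂P := by
  simp only [Finset.mul_sum, mul_left_comm (u _)]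
  rw [integral_finsetSum _ fun k hk => (hF k hk).const_mul _]
  simp only [integral_const_mul]

end WeightedSum

lemma HasMeanCov.mixture {w : κ → ℝ} (hw : ∑ k ∈ A, w k = 1) {F : κ → (ι → ℝ) → ℝ}
    {μ : ι → ℝ} {C : κ → Matrix ι ι ℝ} (h : ∀ k ∈ A, HasMeanCov (F k) μ (C k)) :
    HasMeanCov (fun y => ∑ k ∈ A, w k * F k y) μ (∑ k ∈ A, w k • C k) := by
  have hF1 : ∀ k ∈ A, Integrable fun y => 1 * F k y := fun k hk => by
    simpa only [one_mul] using (h k hk).integrable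
  constructor
  · simpa only [one_mul] using integrable_mul_sum_const_mul w hF1
  · calc ∫ y, ∑ k ∈ A, w k * F k y = ∑ k ∈ A, w k * ∫ y, F k y := by
          simpa only [one_mul] using integral_mul_sum_const_mul w hF1
      _ = 1 := by
          rw [← hw]
          exact Finset.sum_congr rfl fun k hk => by rw [(h k hk).integral_eq_one, mul_one]
  · exact fun i => integrable_mul_sum_const_mul w fun k hk => (h k hk).integrable_sub_mul i
  · intro i
    rw [integral_mul_sum_const_mul w fun k hk => (h k hk).integrable_sub_mul i]
    exact Finset.sum_eq_zero fun k hk => by rw [(h k hk).integral_sub_mul, mul_zero]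
  · exact fun i j =>
      integrable_mul_sum_const_mul w fun k hk => (h k hk).integrable_sub_mul_sub_mul i j
  · intro i j
    rw [integral_mul_sum_const_mul w fun k hk => (h k hk).integrable_sub_mul_sub_mul i j,
      Matrix.sum_apply]
    exact Finset.sum_congr rfl fun k hk => by
      rw [(h k hk).integral_sub_mul_sub_mul, Matrix.smul_apply, smul_eq_mul]

end Mixture

section Affine

variable {κ : Type*}

lemma mulVec_mul_mulVec_mul_eq_sum (M : Matrix κ ι ℝ) (i j : κ) (x : ι → ℝ) (c : ℝ) :
    (M *ᵥ x) i * (M *ᵥ x) j * c = ∑ k, ∑ l, M i k * M j l * (x k * x l * c) := by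
  unfold mulVec dotProduct
  rw [Finset.sum_mul_sum, Finset.sum_mul]
  refine Finset.sum_congr rfl fun k _ => ?_
  rw [Finset.sum_mul]
  exact Finset.sum_congr rfl fun l _ => by ring

section ChangeOfVariables

variable [DecidableEq ι] {M : Matrix ι ι ℝ}

lemma bijective_mulVec_add (hM : M.det ≠ 0) (b : ι → ℝ) :
    Function.Bijective fun z => M *ᵥ z + b :=
  have hunit : IsUnit M := (isUnit_iff_isUnit_det M).2 hM.isUnit
  (Equiv.addRight b).bijective.comp
    ⟨mulVec_injective_iff_isUnit.2 hunit, mulVec_surjective_iff_isUnit.2 hunit⟩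

lemma hasFDerivAt_mulVec_add (M : Matrix ι ι ℝ) (b z : ι → ℝ) :
    HasFDerivAt (fun z => M *ᵥ z + b) (LinearMap.toContinuousLinearMap (toLin' M)) z :=
  (LinearMap.toContinuousLinearMap (toLin' M)).hasFDerivAt.add_const b

lemma integrable_iff_integrable_abs_det_mul_comp (hM : M.det ≠ 0) (b : ι → ℝ)
    (G : (ι → ℝ) → ℝ) :
    Integrable G ↔ Integrable fun z => |M.det| * G (M *ᵥ z + b) := by
  have h := integrableOn_image_iff_integrableOn_abs_det_fderiv_smul volume MeasurableSet.univ
    (fun z _ => (hasFDerivAt_mulVec_add M b z).hasFDerivWithinAt)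
    (bijective_mulVec_add hM b).injective.injOn G
  simpa only [Set.image_univ, (bijective_mulVec_add hM b).surjective.range_eq, integrableOn_univ,
    LinearMap.det_toContinuousLinearMap, LinearMap.det_toLin', smul_eq_mul] using h

lemma integral_eq_integral_abs_det_mul_comp (hM : M.det ≠ 0) (b : ι → ℝ)
    (G : (ι → ℝ) → ℝ) :
    ∫ y, G y = ∫ z, |M.det| * G (M *ᵥ z + b) := by
  have h := integral_image_eq_integral_abs_det_fderiv_smul volume MeasurableSet.univ
    (fun z _ => (hasFDerivAt_mulVec_add M b z).hasFDerivWithinAt)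
    (bijective_mulVec_add hM b).injective.injOn G
  simpa only [Set.image_univ, (bijective_mulVec_add hM b).surjective.range_eq,
    Measure.restrict_univ, LinearMap.det_toContinuousLinearMap, LinearMap.det_toLin',
    smul_eq_mul] using h

end ChangeOfVariables

namespace HasMeanCov

variable {g : (ι → ℝ) → ℝ} {μ : ι → ℝ} {C : Matrix ι ι ℝ}

lemma integrable_mulVec_mul (h : HasMeanCov g μ C) (M : Matrix κ ι ℝ) (i : κ) :
    Integrable fun z => (M *ᵥ (z - μ)) i * g z := by
  simp only [mulVec, dotProduct, Pi.sub_apply, Finset.sum_mul, mul_assoc]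
  exact integrable_finsetSum _ fun k _ => (h.integrable_sub_mul k).const_mul _

lemma integral_mulVec_mul (h : HasMeanCov g μ C) (M : Matrix κ ι ℝ) (i : κ) :
    ∫ z, (M *ᵥ (z - μ)) i * g z = 0 := by
  simp only [mulVec, dotProduct, Pi.sub_apply, Finset.sum_mul, mul_assoc]
  rw [integral_finsetSum _ fun k _ => (h.integrable_sub_mul k).const_mul _]
  simp only [integral_const_mul, h.integral_sub_mul, mul_zero, Finset.sum_const_zero]

lemma integrable_mulVec_mul_mulVec_mul (h : HasMeanCov g μ C) (M : Matrix κ ι ℝ) (i j : κ) :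
    Integrable fun z => (M *ᵥ (z - μ)) i * (M *ᵥ (z - μ)) j * g z := by
  simp only [mulVec_mul_mulVec_mul_eq_sum]
  exact integrable_finsetSum _ fun k _ => integrable_finsetSum _ fun l _ =>
    (h.integrable_sub_mul_sub_mul k l).const_mul _

lemma integral_mulVec_mul_mulVec_mul (h : HasMeanCov g μ C) (M : Matrix κ ι ℝ) (i j : κ) :
    ∫ z, (M *ᵥ (z - μ)) i * (M *ᵥ (z - μ)) j * g z = (M * C * Mᵀ) i j := by
  have hint (k l : ι) : Integrable fun z : ι → ℝ =>
      M i k * M j l * ((z - μ) k * (z - μ) l * g z) :=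
    (h.integrable_sub_mul_sub_mul k l).const_mul _
  calc ∫ z, (M *ᵥ (z - μ)) i * (M *ᵥ (z - μ)) j * g z
      = ∑ k, ∑ l, M i k * M j l * C k l := by
        simp only [mulVec_mul_mulVec_mul_eq_sum]
        rw [integral_finsetSum _ fun k _ => integrable_finsetSum _ fun l _ => hint k l]
        refine Finset.sum_congr rfl fun k _ => ?_
        rw [integral_finsetSum _ fun l _ => hint k l]
        simp only [integral_const_mul, Pi.sub_apply, h.integral_sub_mul_sub_mul]
    _ = (M * C * Mᵀ) i j := by
        simp only [mul_apply, transpose_apply, Finset.sum_mul]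
        rw [Finset.sum_comm]
        exact Finset.sum_congr rfl fun l _ => Finset.sum_congr rfl fun k _ => by ring

/-- `f` is the density of `M Z + b` when `Z` has density `g`, which `hfg` states without the
inverse of `M`. -/
lemma affine [DecidableEq ι] {M : Matrix ι ι ℝ} {f : (ι → ℝ) → ℝ} {b : ι → ℝ}
    (h : HasMeanCov g μ C) (hM : M.det ≠ 0) (hfg : ∀ z, |M.det| * f (M *ᵥ z + b) = g z) :
    HasMeanCov f (M *ᵥ μ + b) (M * C * Mᵀ) := by
  have centered (z : ι → ℝ) (i : ι) :
      (M *ᵥ z + b) i - (M *ᵥ μ + b) i = (M *ᵥ (z - μ)) i := by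
    rw [← Pi.sub_apply, add_sub_add_right_eq_sub, mulVec_sub]
  constructor
  · rw [integrable_iff_integrable_abs_det_mul_comp hM b]
    simpa only [hfg] using h.integrable
  · rw [integral_eq_integral_abs_det_mul_comp hM b]
    simpa only [hfg] using h.integral_eq_one
  · intro i
    rw [integrable_iff_integrable_abs_det_mul_comp hM b]
    simpa only [mul_left_comm |M.det|, hfg, centered] using h.integrable_mulVec_mul M i
  · intro i
    rw [integral_eq_integral_abs_det_mul_comp hM b]
    simpa only [mul_left_comm |M.det|, hfg, centered] using h.integral_mulVec_mul M i
  · intro i j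
    rw [integrable_iff_integrable_abs_det_mul_comp hM b]
    simpa only [mul_left_comm |M.det|, hfg, centered] using
      h.integrable_mulVec_mul_mulVec_mul M i j
  · intro i j
    rw [integral_eq_integral_abs_det_mul_comp hM b]
    simpa only [mul_left_comm |M.det|, hfg, centered] using
      h.integral_mulVec_mul_mulVec_mul M i j

end HasMeanCov

end Affine

end MeanCov

section StudentT

section Spherical

variable {ι : Type*} [Fintype ι]

/-- The Student-t density on `ι → ℝ` with `ν` degrees of freedom, location `0` and scale matrix
`ν⁻¹ • 1`. With this scale the quadratic form over `ν` is the squared Euclidean norm, so every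
Student-t density is an affine image of this one. -/
noncomputable def sphericalTDensity (ν : ℝ) (z : ι → ℝ) : ℝ :=
  Real.Gamma ((ν + Fintype.card ι) / 2) /
      (Real.Gamma (ν / 2) * Real.pi ^ ((Fintype.card ι : ℝ) / 2)) *
    (1 + z ⬝ᵥ z) ^ (-((ν + Fintype.card ι) / 2))

lemma integral_sphericalTDensity {ν : ℝ} (hν : 0 < ν) :
    ∫ z : ι → ℝ, sphericalTDensity ν z = 1 := by
  have : 0 < Real.Gamma (ν / 2) := Real.Gamma_pos_of_pos (by positivity)
  have : 0 < Real.Gamma ((ν + Fintype.card ι) / 2) := Real.Gamma_pos_of_pos (by positivity)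
  have : 0 < Real.pi ^ ((Fintype.card ι : ℝ) / 2) := by positivity
  simp only [sphericalTDensity]
  rw [integral_const_mul, integral_one_add_dotProduct_rpow_neg (by linarith),
    show (ν + Fintype.card ι) / 2 - Fintype.card ι / 2 = ν / 2 by ring]
  field_simp

lemma integrable_mul_sphericalTDensity {ν : ℝ} (hν : 2 < ν) {u : (ι → ℝ) → ℝ}
    (hu : Measurable u) (hbound : ∀ z, |u z| ≤ 1 + z ⬝ᵥ z) :
    Integrable fun z => u z * sphericalTDensity ν z := by
  simp only [sphericalTDensity, mul_left_comm (u _)]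
  exact (integrable_mul_one_add_dotProduct_rpow_neg (by linarith) hu hbound).const_mul _

lemma integral_mul_self_mul_sphericalTDensity {ν : ℝ} (hν : 2 < ν) (i : ι) :
    ∫ z : ι → ℝ, z i * z i * sphericalTDensity ν z = (ν - 2)⁻¹ := by
  have mass := integral_sphericalTDensity (ι := ι) (zero_lt_two.trans hν)
  simp only [sphericalTDensity, integral_const_mul] at mass
  simp only [sphericalTDensity, mul_left_comm (_ * _)]
  rw [integral_const_mul, integral_mul_self_mul_one_add_dotProduct_rpow_neg (by linarith),
    mul_left_comm, mass]
  ring_nf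

lemma hasMeanCov_sphericalTDensity [DecidableEq ι] {ν : ℝ} (hν : 2 < ν) :
    HasMeanCov (sphericalTDensity ν : (ι → ℝ) → ℝ) 0 ((ν - 2)⁻¹ • 1) := by
  constructor
  · simpa only [one_mul] using integrable_mul_sphericalTDensity (ι := ι) hν (u := fun _ => 1)
      measurable_const fun z => by simp [dotProduct_self_nonneg]
  · exact integral_sphericalTDensity (zero_lt_two.trans hν)
  · intro i
    simpa using integrable_mul_sphericalTDensity hν (measurable_pi_apply i)
      (abs_apply_le_one_add_dotProduct_self · i)
  · intro i
    simp only [Pi.zero_apply, sub_zero]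
    exact integral_apply_mul_radial (fun q => _ * (1 + q) ^ _) i
  · intro i j
    simpa using integrable_mul_sphericalTDensity hν (by fun_prop)
      (abs_apply_mul_apply_le_one_add_dotProduct_self · i j)
  · intro i j
    rcases eq_or_ne i j with rfl | hij
    · simpa using integral_mul_self_mul_sphericalTDensity hν i
    · simp only [Pi.zero_apply, sub_zero, Matrix.smul_apply, one_apply_ne hij, smul_zero]
      exact integral_apply_mul_apply_mul_radial_of_ne (fun q => _ * (1 + q) ^ _) hij

end Spherical

section ScaleMatrix

open scoped MatrixOrder in
lemma exists_isUnit_eq_mul_transpose_of_posDef {ι : Type*} [Fintype ι] [DecidableEq ι]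
    {A : Matrix ι ι ℝ} (hA : A.PosDef) : ∃ M : Matrix ι ι ℝ, IsUnit M ∧ A = M * Mᵀ := by
  obtain ⟨M, hM, hAM⟩ :=
    CStarAlgebra.isStrictlyPositive_iff_eq_mul_star_self.1 hA.isStrictlyPositive
  exact ⟨M, hM, by rw [hAM, star_eq_conjTranspose, conjTranspose_eq_transpose_of_trivial]⟩

variable {m : ℕ} {M S : Matrix (Fin m) (Fin m) ℝ} {ν : ℝ}

lemma abs_det_eq_of_smul_eq_mul_transpose (hν : 0 < ν) (hSM : ν • S = M * Mᵀ) :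
    |M.det| = ν ^ ((m : ℝ) / 2) * √S.det := by
  have hdet : ν ^ m * S.det = M.det * M.det := by
    simpa only [det_smul, det_mul, det_transpose, Fintype.card_fin] using congrArg det hSM
  rw [← Real.sqrt_mul_self_eq_abs, ← hdet, Real.sqrt_mul (by positivity), Real.sqrt_eq_rpow (ν ^ m),
    ← Real.rpow_natCast, ← Real.rpow_mul hν.le, mul_one_div]

lemma mulVec_dotProduct_inv_mulVec_div (hν : ν ≠ 0) (hM : IsUnit M) (hSM : ν • S = M * Mᵀ)
    (z : Fin m → ℝ) : (M *ᵥ z) ⬝ᵥ (S⁻¹ *ᵥ (M *ᵥ z)) / ν = z ⬝ᵥ z := by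
  have hMdet : IsUnit M.det := (isUnit_iff_isUnit_det M).1 hM
  have hMTdet : IsUnit Mᵀ.det := by rwa [det_transpose]
  have hinv : S⁻¹ = ν • (Mᵀ⁻¹ * M⁻¹) := by
    refine inv_eq_right_inv ?_
    rw [Matrix.mul_smul, ← Matrix.smul_mul, hSM, Matrix.mul_assoc,
      mul_nonsing_inv_cancel_left _ _ hMTdet, mul_nonsing_inv _ hMdet]
  have hcancel : S⁻¹ *ᵥ (M *ᵥ z) = ν • (Mᵀ⁻¹ *ᵥ z) := by
    rw [mulVec_mulVec, hinv, Matrix.smul_mul, nonsing_inv_mul_cancel_right _ _ hMdet, smul_mulVec]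
  have hadjoint : (M *ᵥ z) ⬝ᵥ (Mᵀ⁻¹ *ᵥ z) = z ⬝ᵥ z := by
    rw [← vecMul_transpose, ← dotProduct_mulVec, mulVec_mulVec, mul_nonsing_inv _ hMTdet,
      one_mulVec]
  rw [hcancel, dotProduct_smul, hadjoint, smul_eq_mul, mul_div_cancel_left₀ _ hν]

lemma abs_det_mul_multivariateTDensity (hν : 0 < ν) (hM : IsUnit M) (hSM : ν • S = M * Mᵀ)
    (μ z : Fin m → ℝ) :
    |M.det| * multivariateTDensity m ν μ S (M *ᵥ z + μ) = sphericalTDensity ν z := by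
  have hz : 0 < 1 + z ⬝ᵥ z := by linarith [dotProduct_self_nonneg z]
  have hdet : 0 < |M.det| := abs_pos.2 ((isUnit_iff_isUnit_det M).1 hM).ne_zero
  rw [multivariateTDensity, sphericalTDensity, add_sub_cancel_right,
    mulVec_dotProduct_inv_mulVec_div hν.ne' hM hSM, abs_of_pos hz, neg_div, Fintype.card_fin,
    mul_right_comm _ _ √S.det, mul_assoc _ _ √S.det,
    ← abs_det_eq_of_smul_eq_mul_transpose hν hSM]
  field_simp

lemma hasMeanCov_multivariateTDensity (hν : 2 < ν) (μ : Fin m → ℝ) (hS : S.PosDef) :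
    HasMeanCov (multivariateTDensity m ν μ S) μ ((ν / (ν - 2)) • S) := by
  have hν0 : 0 < ν := zero_lt_two.trans hν
  obtain ⟨M, hM, hSM⟩ := exists_isUnit_eq_mul_transpose_of_posDef (hS.smul hν0)
  have h := (hasMeanCov_sphericalTDensity hν).affine ((isUnit_iff_isUnit_det M).1 hM).ne_zero
    (abs_det_mul_multivariateTDensity hν0 hM hSM μ)
  rwa [mulVec_zero, zero_add, Matrix.mul_smul, Matrix.mul_one, Matrix.smul_mul, ← hSM, smul_smul,
    inv_mul_eq_div] at h

end ScaleMatrix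

end StudentT

section IndependentBlocks

section WeightAt

variable {K : Type*} [DecidableEq K] {E : K → Type*}

/-- The family `g` with its `k`-th member multiplied by the weight `u`. It turns a moment of a
product density into the integral of a product of functions of the single factors. -/
def weightAt (g : ∀ k, E k → ℝ) (k : K) (u : E k → ℝ) : ∀ k, E k → ℝ :=
  Function.update g k fun v => u v * g k v

variable {g : ∀ k, E k → ℝ} {k : K} {u : E k → ℝ}

lemma weightAt_self : weightAt g k u k = fun v => u v * g k v :=
  Function.update_self ..

lemma weightAt_of_ne {j : K} (h : j ≠ k) : weightAt g k u j = g j :=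
  Function.update_of_ne h ..

lemma prod_weightAt [Fintype K] (x : ∀ k, E k) :
    ∏ j, weightAt g k u j (x j) = u (x k) * ∏ j, g j (x j) := by
  rw [← Finset.mul_prod_erase _ _ (Finset.mem_univ k),
    ← Finset.mul_prod_erase _ (fun j => g j (x j)) (Finset.mem_univ k), weightAt_self, mul_assoc]
  congr 2
  exact Finset.prod_congr rfl fun j hj => by rw [weightAt_of_ne (Finset.ne_of_mem_erase hj)]

lemma integrable_weightAt [∀ k, MeasureSpace (E k)] (hg : ∀ j, Integrable (g j))
    (hu : Integrable fun v => u v * g k v) (j : K) : Integrable (weightAt g k u j) := by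
  rcases eq_or_ne j k with rfl | hjk
  · rwa [weightAt_self]
  · rw [weightAt_of_ne hjk]
    exact hg j

lemma prod_integral_weightAt [Fintype K] [∀ k, MeasureSpace (E k)] (hg : ∀ j, ∫ v, g j v = 1) :
    ∏ j, ∫ v, weightAt g k u j v = ∫ v, u v * g k v := by
  rw [Finset.prod_eq_single_of_mem k (Finset.mem_univ k), weightAt_self]
  intro j _ hjk
  rw [weightAt_of_ne hjk, hg j]

end WeightAt

variable {K : Type*} [Fintype K] {κ : K → Type*} [∀ k, Fintype (κ k)]

lemma measurePreserving_piCurry :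
    MeasurePreserving (MeasurableEquiv.piCurry fun (k : K) (_ : κ k) => ℝ) := by
  refine MeasurePreserving.symm (MeasurableEquiv.piCurry fun (k : K) (_ : κ k) => ℝ).symm
    ⟨MeasurableEquiv.measurable _, (Measure.pi_eq fun s _ => ?_).symm⟩
  have preimage_box : (MeasurableEquiv.piCurry fun (k : K) (_ : κ k) => ℝ).symm ⁻¹' Set.univ.pi s =
      Set.univ.pi fun k => Set.univ.pi fun a => s ⟨k, a⟩ := by
    ext x
    simp only [Set.mem_preimage, Set.mem_univ_pi, Sigma.forall]
    rfl
  simp only [MeasurableEquiv.map_apply, preimage_box, volume_pi_pi, Fintype.prod_sigma]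

variable {g : ∀ k, (κ k → ℝ) → ℝ}

lemma integrable_prod_sigma (hg : ∀ k, Integrable (g k)) :
    Integrable fun y : (Σ k, κ k) → ℝ => ∏ k, g k fun a => y ⟨k, a⟩ :=
  (measurePreserving_piCurry.integrable_comp_emb (MeasurableEquiv.measurableEmbedding _)).2
    (Integrable.fintype_prod_dep (μ := fun _ => volume) hg)

lemma integral_prod_sigma (g : ∀ k, (κ k → ℝ) → ℝ) :
    ∫ y : (Σ k, κ k) → ℝ, ∏ k, g k (fun a => y ⟨k, a⟩) = ∏ k, ∫ v, g k v :=
  (measurePreserving_piCurry.integral_comp' fun x : ∀ k, κ k → ℝ => ∏ k, g k (x k)).trans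
    (integral_fintype_prod_volume_eq_prod g)

lemma integrable_mul_prod_sigma (hg : ∀ j, Integrable (g j)) {k : K} {u : (κ k → ℝ) → ℝ}
    (hu : Integrable fun v => u v * g k v) :
    Integrable fun y : (Σ k, κ k) → ℝ => u (fun a => y ⟨k, a⟩) * ∏ j, g j fun a => y ⟨j, a⟩ := by
  classical
  simpa only [prod_weightAt (E := fun k => κ k → ℝ) (fun _ _ => _)] using
    integrable_prod_sigma (integrable_weightAt hg hu)

lemma integral_mul_prod_sigma (hg : ∀ j, ∫ v, g j v = 1) (k : K) (u : (κ k → ℝ) → ℝ) :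
    ∫ y : (Σ k, κ k) → ℝ, u (fun a => y ⟨k, a⟩) * ∏ j, g j (fun a => y ⟨j, a⟩) =
      ∫ v, u v * g k v := by
  classical
  rw [← prod_integral_weightAt hg, ← integral_prod_sigma]
  simp only [prod_weightAt (E := fun k => κ k → ℝ) (fun _ _ => _)]

lemma integrable_mul_mul_prod_sigma (hg : ∀ j, Integrable (g j)) {k l : K} (hkl : k ≠ l)
    {u : (κ k → ℝ) → ℝ} {v : (κ l → ℝ) → ℝ} (hu : Integrable fun x => u x * g k x)
    (hv : Integrable fun x => v x * g l x) :
    Integrable fun y : (Σ k, κ k) → ℝ =>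
      u (fun a => y ⟨k, a⟩) * v (fun a => y ⟨l, a⟩) * ∏ j, g j fun a => y ⟨j, a⟩ := by
  classical
  have h := integrable_mul_prod_sigma (integrable_weightAt hg hv) (k := k) (u := u)
    (by rwa [weightAt_of_ne hkl])
  simpa only [prod_weightAt (E := fun k => κ k → ℝ) (fun _ _ => _), ← mul_assoc] using h

lemma integral_mul_mul_prod_sigma (hg : ∀ j, ∫ v, g j v = 1) {k l : K} (hkl : k ≠ l)
    (u : (κ k → ℝ) → ℝ) (v : (κ l → ℝ) → ℝ) :
    ∫ y : (Σ k, κ k) → ℝ,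
        u (fun a => y ⟨k, a⟩) * v (fun a => y ⟨l, a⟩) * ∏ j, g j (fun a => y ⟨j, a⟩) =
      (∫ x, u x * g k x) * ∫ x, v x * g l x := by
  classical
  have h := integral_prod_sigma (weightAt (weightAt g l v) k u)
  rw [Fintype.prod_eq_mul k l hkl fun j hj => by
      rw [weightAt_of_ne hj.1, weightAt_of_ne hj.2, hg j],
    weightAt_self, weightAt_of_ne hkl, weightAt_of_ne hkl.symm, weightAt_self] at h
  simpa only [prod_weightAt (E := fun k => κ k → ℝ) (fun _ _ => _), ← mul_assoc] using h

lemma HasMeanCov.prod_sigma [DecidableEq K] {μ : ∀ k, κ k → ℝ} {C : ∀ k, Matrix (κ k) (κ k) ℝ}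
    (h : ∀ k, HasMeanCov (g k) (μ k) (C k)) :
    HasMeanCov (fun y : (Σ k, κ k) → ℝ => ∏ k, g k fun a => y ⟨k, a⟩) (fun p => μ p.1 p.2)
      (blockDiagonal' C) := by
  have hint (k : K) : Integrable (g k) := (h k).integrable
  have hmass (k : K) : ∫ v, g k v = 1 := (h k).integral_eq_one
  constructor
  · exact integrable_prod_sigma hint
  · rw [integral_prod_sigma, Finset.prod_eq_one fun k _ => hmass k]
  · exact fun ⟨k, a⟩ => integrable_mul_prod_sigma hint ((h k).integrable_sub_mul a)
  · exact fun ⟨k, a⟩ => (integral_mul_prod_sigma hmass k fun v => v a - μ k a).trans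
      ((h k).integral_sub_mul a)
  · rintro ⟨k, a⟩ ⟨l, b⟩
    rcases eq_or_ne k l with rfl | hkl
    · exact integrable_mul_prod_sigma hint ((h k).integrable_sub_mul_sub_mul a b)
    · exact integrable_mul_mul_prod_sigma hint hkl ((h k).integrable_sub_mul a)
        ((h l).integrable_sub_mul b)
  · rintro ⟨k, a⟩ ⟨l, b⟩
    rcases eq_or_ne k l with rfl | hkl
    · rw [blockDiagonal'_apply_eq, ← (h k).integral_sub_mul_sub_mul]
      exact integral_mul_prod_sigma hmass k fun v => (v a - μ k a) * (v b - μ k b)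
    · rw [blockDiagonal'_apply_ne _ _ _ hkl]
      refine (integral_mul_mul_prod_sigma hmass hkl (fun v => v a - μ k a)
        fun v => v b - μ l b).trans ?_
      rw [(h k).integral_sub_mul, zero_mul]

end IndependentBlocks

section BlockDensity

variable {ι : Type*}

/-- Every index lies in exactly one member of `ρ`: a set partition of `ι`, up to an empty member,
which contributes the factor `1` to a product over blocks. -/
def IsExactCover (ρ : Finset (Finset ι)) : Prop :=
  ∀ i, ∃! S, S ∈ ρ ∧ i ∈ S

lemma IsContigPartition.isExactCover {n : ℕ} {ρ : Finset (Finset (Fin n))}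
    (h : IsContigPartition n ρ) : IsExactCover ρ := by
  classical
  obtain ⟨k, τ, -, hτ0, hτk, hτlt, rfl⟩ := h
  intro i
  have hτmono : StrictMonoOn τ (Set.Iic k) := strictMonoOn_Iic_of_lt_succ hτlt
  have hex : ∃ j, (i : ℕ) < τ j := ⟨k, hτk ▸ i.2⟩
  obtain ⟨j, hj⟩ : ∃ j, Nat.find hex = j + 1 :=
    Nat.exists_eq_succ_of_ne_zero fun h0 => by simpa [h0, hτ0] using Nat.find_spec hex
  have hlt : (i : ℕ) < τ (j + 1) := hj ▸ Nat.find_spec hex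
  have hle : τ j ≤ i := not_lt.1 (Nat.find_min hex (by omega))
  have hjk : j + 1 ≤ k := hj ▸ Nat.find_min' hex (hτk ▸ i.2)
  refine ⟨_, ⟨Finset.mem_image_of_mem _ (Finset.mem_Icc.2 ⟨Nat.le_add_left 1 j, hjk⟩),
    by simpa using ⟨hle, hlt⟩⟩, ?_⟩
  rintro T ⟨hT, hiT⟩
  obtain ⟨l, hl, rfl⟩ := Finset.mem_image.1 hT
  obtain ⟨hl1, hlk⟩ := Finset.mem_Icc.1 hl
  obtain ⟨hle', hlt'⟩ : τ (l - 1) ≤ i ∧ i < τ l := by simpa using hiT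
  have h1 : l - 1 < j + 1 :=
    (hτmono.lt_iff_lt (Set.mem_Iic.2 (by omega)) hjk).1 (hle'.trans_lt hlt)
  have h2 : j < l := (hτmono.lt_iff_lt (Set.mem_Iic.2 (by omega)) hlk).1 (hle.trans_lt hlt')
  obtain rfl : l = j + 1 := by omega
  rfl

open Classical in
/-- The covariance matrix of `blockTDensity`. -/
noncomputable def blockTCov [DecidableEq ι] (κ0 α0 β0 : ℝ) (ρ : Finset (Finset ι)) : Matrix ι ι ℝ :=
  .of fun i j => if ∃ S ∈ ρ, i ∈ S ∧ j ∈ S then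
    β0 / (α0 - 1) * ((1 : Matrix ι ι ℝ) i j + κ0⁻¹) else 0

variable [LinearOrder ι] {ρ : Finset (Finset ι)}

namespace IsExactCover

lemma bijective_orderEmbOfFin (hρ : IsExactCover ρ) :
    Function.Bijective fun p : Σ S : ρ, Fin S.1.card => p.1.1.orderEmbOfFin rfl p.2 := by
  constructor
  · rintro ⟨⟨S, hS⟩, a⟩ ⟨⟨T, hT⟩, b⟩ (hab : S.orderEmbOfFin rfl a = T.orderEmbOfFin rfl b)
    obtain rfl : S = T := (hρ _).unique ⟨hS, S.orderEmbOfFin_mem rfl a⟩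
      ⟨hT, hab ▸ T.orderEmbOfFin_mem rfl b⟩
    rw [(S.orderEmbOfFin rfl).injective hab]
  · intro i
    obtain ⟨S, ⟨hS, hi⟩, -⟩ := hρ i
    obtain ⟨a, ha⟩ : i ∈ Set.range (S.orderEmbOfFin rfl) := by
      rwa [Finset.range_orderEmbOfFin]
    exact ⟨⟨⟨S, hS⟩, a⟩, ha⟩

/-- The identification of the positions inside the blocks of `ρ` with the indices, each block
being enumerated in increasing order. -/
noncomputable def blockEquiv (hρ : IsExactCover ρ) : (Σ S : ρ, Fin S.1.card) ≃ ι :=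
  Equiv.ofBijective _ hρ.bijective_orderEmbOfFin

lemma blockEquiv_mem (hρ : IsExactCover ρ) (p : Σ S : ρ, Fin S.1.card) :
    hρ.blockEquiv p ∈ p.1.1 :=
  p.1.1.orderEmbOfFin_mem rfl p.2

lemma fst_eq_fst_iff (hρ : IsExactCover ρ) {p q : Σ S : ρ, Fin S.1.card} :
    p.1 = q.1 ↔ ∃ S ∈ ρ, hρ.blockEquiv p ∈ S ∧ hρ.blockEquiv q ∈ S := by
  constructor
  · exact fun h => ⟨p.1, p.1.2, hρ.blockEquiv_mem p, h ▸ hρ.blockEquiv_mem q⟩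
  · rintro ⟨S, hS, hp, hq⟩
    exact Subtype.ext (((hρ _).unique ⟨p.1.2, hρ.blockEquiv_mem p⟩ ⟨hS, hp⟩).trans
      ((hρ _).unique ⟨hS, hq⟩ ⟨q.1.2, hρ.blockEquiv_mem q⟩))

end IsExactCover

/-- The density `f_ρ` of independent Student-t blocks, one for each member of `ρ`. -/
noncomputable def blockTDensity (μ0 κ0 α0 β0 : ℝ) (ρ : Finset (Finset ι)) (y : ι → ℝ) : ℝ :=
  ∏ S ∈ ρ, multivariateTDensity S.card (2 * α0) (fun _ => μ0)
    ((β0 / α0) • ((1 : Matrix (Fin S.card) (Fin S.card) ℝ) +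
      κ0⁻¹ • Matrix.of fun _ _ => (1 : ℝ)))
    (fun i => y (S.orderEmbOfFin rfl i))

lemma posDef_smul_one_add_smul_ones {m : Type*} [Finite m] [DecidableEq m] {c d : ℝ} (hc : 0 < c)
    (hd : 0 ≤ d) : (c • ((1 : Matrix m m ℝ) + d • Matrix.of fun _ _ => (1 : ℝ))).PosDef := by
  have hones : (Matrix.of fun _ _ => (1 : ℝ) : Matrix m m ℝ).PosSemidef := by
    convert posSemidef_vecMulVec_self_star fun _ : m => (1 : ℝ) using 1
    ext
    simp [vecMulVec]
  exact (PosDef.one.add_posSemidef (hones.smul hd)).smul hc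

variable {κ0 α0 β0 : ℝ}

lemma IsExactCover.reindex_blockDiagonal'_eq_blockTCov (hρ : IsExactCover ρ) (hα : 1 < α0) :
    (blockDiagonal' fun S : ρ => (2 * α0 / (2 * α0 - 2)) • (β0 / α0) •
      ((1 : Matrix (Fin S.1.card) (Fin S.1.card) ℝ) + κ0⁻¹ • Matrix.of fun _ _ => (1 : ℝ))).reindex
      hρ.blockEquiv hρ.blockEquiv = blockTCov κ0 α0 β0 ρ := by
  have hcoef : 2 * α0 / (2 * α0 - 2) * (β0 / α0) = β0 / (α0 - 1) := by
    have : α0 ≠ 0 := by linarith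
    rw [← mul_sub_one, mul_div_mul_left _ _ two_ne_zero]
    field_simp
  ext i j
  obtain ⟨p, rfl⟩ := hρ.blockEquiv.surjective i
  obtain ⟨q, rfl⟩ := hρ.blockEquiv.surjective j
  simp only [reindex_apply, submatrix_apply, Equiv.symm_apply_apply, blockTCov, of_apply,
    ← hρ.fst_eq_fst_iff]
  obtain ⟨S, a⟩ := p
  obtain ⟨T, b⟩ := q
  rcases eq_or_ne S T with rfl | hST
  · simp only [blockDiagonal'_apply_eq, smul_smul, hcoef, Matrix.smul_apply, Matrix.add_apply,
      of_apply, one_apply, EmbeddingLike.apply_eq_iff_eq, Sigma.mk.injEq, heq_eq_eq, true_and,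
      if_true, smul_eq_mul, mul_one]
  · simp [blockDiagonal'_apply_ne _ _ _ hST, hST]

lemma IsExactCover.hasMeanCov_blockTDensity [Fintype ι] (hρ : IsExactCover ρ) (μ0 : ℝ) (hκ : 0 < κ0)
    (hα : 1 < α0) (hβ : 0 < β0) :
    HasMeanCov (blockTDensity μ0 κ0 α0 β0 ρ) (fun _ => μ0) (blockTCov κ0 α0 β0 ρ) := by
  have hα0 : 0 < α0 := zero_lt_one.trans hα
  have h := (HasMeanCov.prod_sigma fun S : ρ => hasMeanCov_multivariateTDensity (ν := 2 * α0)
    (by linarith) (fun _ : Fin S.1.card => μ0)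
    (posDef_smul_one_add_smul_ones (div_pos hβ hα0) (inv_nonneg.2 hκ.le))).reindex hρ.blockEquiv
  rw [hρ.reindex_blockDiagonal'_eq_blockTCov hα] at h
  convert h using 1
  · exact funext fun y => (Finset.prod_coe_sort ρ _).symm
  · rfl

end BlockDensity

section Correlation

variable {ι : Type*} [DecidableEq ι] {κ0 α0 β0 : ℝ} {A : Finset (Finset (Finset ι))}
  {w : Finset (Finset ι) → ℝ}

lemma sum_smul_blockTCov_apply_self (hA : ∀ ρ ∈ A, IsExactCover ρ) (hw : ∑ ρ ∈ A, w ρ = 1)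
    (i : ι) :
    (∑ ρ ∈ A, w ρ • blockTCov κ0 α0 β0 ρ) i i = β0 / (α0 - 1) * (1 + κ0⁻¹) := by
  have entry : ∀ ρ ∈ A, blockTCov κ0 α0 β0 ρ i i = β0 / (α0 - 1) * (1 + κ0⁻¹) := by
    intro ρ hρ
    obtain ⟨S, ⟨hS, hi⟩, -⟩ := hA ρ hρ i
    rw [blockTCov, of_apply, if_pos ⟨S, hS, hi, hi⟩, one_apply_eq]
  simp only [Matrix.sum_apply, Matrix.smul_apply, smul_eq_mul]
  rw [Finset.sum_congr rfl fun ρ hρ => by rw [entry ρ hρ], ← Finset.sum_mul, hw, one_mul]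

open Classical in
lemma sum_smul_blockTCov_apply_of_ne {i j : ι} (hij : i ≠ j) :
    (∑ ρ ∈ A, w ρ • blockTCov κ0 α0 β0 ρ) i j =
      (∑ ρ ∈ A with ∃ S ∈ ρ, i ∈ S ∧ j ∈ S, w ρ) * (β0 / (α0 - 1) * κ0⁻¹) := by
  simp only [Matrix.sum_apply, Matrix.smul_apply, smul_eq_mul, blockTCov, of_apply,
    one_apply_ne hij, zero_add, mul_ite, mul_zero, Finset.sum_mul, Finset.sum_filter, ite_mul,
    zero_mul]

open Classical in
lemma sum_smul_blockTCov_correlation (hκ : 0 < κ0) (hα : 1 < α0) (hβ : 0 < β0)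
    (hA : ∀ ρ ∈ A, IsExactCover ρ) (hw : ∑ ρ ∈ A, w ρ = 1) {r s : ι} (hrs : r ≠ s) :
    (∑ ρ ∈ A, w ρ • blockTCov κ0 α0 β0 ρ) r s /
        √((∑ ρ ∈ A, w ρ • blockTCov κ0 α0 β0 ρ) r r *
          (∑ ρ ∈ A, w ρ • blockTCov κ0 α0 β0 ρ) s s) =
      (∑ ρ ∈ A with ∃ S ∈ ρ, r ∈ S ∧ s ∈ S, w ρ) / (1 + κ0) := by
  have hα1 : 0 < α0 - 1 := sub_pos.2 hα
  rw [sum_smul_blockTCov_apply_self hA hw, sum_smul_blockTCov_apply_self hA hw,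
    sum_smul_blockTCov_apply_of_ne hrs, Real.sqrt_mul_self (by positivity)]
  field_simp
  ring

end Correlation

theorem prior_correlation_change_point_PPM_general {ι : Type*} [Fintype ι] [LinearOrder ι]
    {𝒜 : Set (Finset (Finset ι))} (h𝒜 : ∀ ρ ∈ 𝒜, IsExactCover ρ)
    (μ0 : ℝ) {κ0 α0 β0 : ℝ} (hκ : 0 < κ0) (hα : 1 < α0) (hβ : 0 < β0)
    {w : Finset (Finset ι) → ℝ} (hw0 : ∀ ρ ∈ 𝒜, 0 ≤ w ρ) (hw1 : ∑ᶠ ρ ∈ 𝒜, w ρ = 1)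
    {r s : ι} (hrs : r ≠ s) :
    let f : (ι → ℝ) → ℝ := fun y => ∑ᶠ ρ ∈ 𝒜, w ρ * blockTDensity μ0 κ0 α0 β0 ρ y
    let mean : ι → ℝ := fun i => ∫ y : ι → ℝ, y i * f y
    let cov : ι → ι → ℝ := fun i j => ∫ y : ι → ℝ, (y i - mean i) * (y j - mean j) * f y
    cov r s / √(cov r r * cov s s) =
        (∑ᶠ ρ ∈ {ρ | ρ ∈ 𝒜 ∧ ∃ S ∈ ρ, r ∈ S ∧ s ∈ S}, w ρ) / (1 + κ0) ∧
      0 ≤ cov r s / √(cov r r * cov s s) ∧ cov r s / √(cov r r * cov s s) ≤ 1 / (1 + κ0) := by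
  classical
  intro f mean cov
  set A : Finset (Finset (Finset ι)) := 𝒜.toFinset
  have hA : ∀ ρ ∈ A, IsExactCover ρ := fun ρ hρ => h𝒜 ρ (Set.mem_toFinset.1 hρ)
  have hw0A : ∀ ρ ∈ A, 0 ≤ w ρ := fun ρ hρ => hw0 ρ (Set.mem_toFinset.1 hρ)
  have hw1A : ∑ ρ ∈ A, w ρ = 1 := by rwa [finsum_mem_eq_toFinset_sum] at hw1
  have hf : HasMeanCov f (fun _ => μ0) (∑ ρ ∈ A, w ρ • blockTCov κ0 α0 β0 ρ) := by
    simp only [f, finsum_mem_eq_toFinset_sum]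
    exact .mixture hw1A fun ρ hρ => (hA ρ hρ).hasMeanCov_blockTDensity μ0 hκ hα hβ
  have hprob : ∑ᶠ ρ ∈ {ρ | ρ ∈ 𝒜 ∧ ∃ S ∈ ρ, r ∈ S ∧ s ∈ S}, w ρ =
      ∑ ρ ∈ A with ∃ S ∈ ρ, r ∈ S ∧ s ∈ S, w ρ := by
    rw [finsum_mem_eq_toFinset_sum]
    congr 1
    ext
    simp [A]
  have hcorr : cov r s / √(cov r r * cov s s) =
      (∑ ρ ∈ A with ∃ S ∈ ρ, r ∈ S ∧ s ∈ S, w ρ) / (1 + κ0) := by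
    simp only [cov, mean, hf.integral_apply_mul, hf.integral_sub_mul_sub_mul]
    exact sum_smul_blockTCov_correlation hκ hα hβ hA hw1A hrs
  have hprob_nonneg : 0 ≤ ∑ ρ ∈ A with ∃ S ∈ ρ, r ∈ S ∧ s ∈ S, w ρ :=
    Finset.sum_nonneg fun ρ hρ => hw0A ρ (Finset.mem_of_mem_filter ρ hρ)
  have hprob_le : ∑ ρ ∈ A with ∃ S ∈ ρ, r ∈ S ∧ s ∈ S, w ρ ≤ 1 :=
    hw1A ▸ Finset.sum_le_sum_of_subset_of_nonneg (Finset.filter_subset ..) fun ρ hρ _ => hw0A ρ hρ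
  rw [hcorr, hprob]
  exact ⟨rfl, by positivity, by gcongr⟩

/-- **Prior correlation of observations under the change point PPM.**  Under the
mixture density `f(y) = Σ_{ρ ∈ C_n} w(ρ) ∏_{S ∈ ρ} t_{|S|}(y_S ∣ 2α₀, μ₀𝟏,
(β₀/α₀)(I + κ₀⁻¹J))`, the correlation of two distinct coordinates `y_r, y_s`
equals `P_w(r, s in the same block) / (1 + κ₀)`; in particular it lies in
`[0, 1/(1+κ₀)]`. -/
theorem prior_correlation_change_point_PPM (n : ℕ) (hn : 2 ≤ n)
    (μ0 κ0 α0 β0 : ℝ) (hκ : 0 < κ0) (hα : 1 < α0) (hβ : 0 < β0)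
    (w : Finset (Finset (Fin n)) → ℝ)
    (hw0 : ∀ ρ, 0 ≤ w ρ)
    (hw1 : ∑ᶠ ρ ∈ {ρ | IsContigPartition n ρ}, w ρ = 1)
    (hwsupp : ∀ ρ, ¬IsContigPartition n ρ → w ρ = 0)
    (r s : Fin n) (hrs : r ≠ s) :
    let f : (Fin n → ℝ) → ℝ := fun y =>
      ∑ᶠ ρ ∈ {ρ | IsContigPartition n ρ}, w ρ *
        ∏ S ∈ ρ, multivariateTDensity S.card (2 * α0) (fun _ => μ0)
          ((β0 / α0) • ((1 : Matrix (Fin S.card) (Fin S.card) ℝ) +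
            κ0⁻¹ • Matrix.of fun _ _ => (1 : ℝ)))
          (fun i => y (S.orderEmbOfFin rfl i))
    let mean : Fin n → ℝ := fun i => ∫ y : Fin n → ℝ, y i * f y
    let cov : Fin n → Fin n → ℝ := fun i j =>
      ∫ y : Fin n → ℝ, (y i - mean i) * (y j - mean j) * f y
    cov r s / Real.sqrt (cov r r * cov s s) =
        (∑ᶠ ρ ∈ {ρ | IsContigPartition n ρ ∧ ∃ S ∈ ρ, r ∈ S ∧ s ∈ S}, w ρ) / (1 + κ0) ∧
      0 ≤ cov r s / Real.sqrt (cov r r * cov s s) ∧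
        cov r s / Real.sqrt (cov r r * cov s s) ≤ 1 / (1 + κ0) :=
  prior_correlation_change_point_PPM_general (fun _ hρ => hρ.isExactCover) μ0 hκ hα hβ
    (fun ρ _ => hw0 ρ) hw1 hrs
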